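/- Define the zeta-modified operators L̄⁽ʳ⁾(n) = L⁽ʳ⁾(n) for n ≠ 0 and L̄⁽ʳ⁾(0) = L⁽ʳ⁾(0) + (−1)ʳ·(1/2)·ζ(−2r−1)·id_S. Then for all r, s ∈ ℕ there exists a constant c_{r,s} ∈ ℂ such that for every m ∈ ℤ the commutator [L̄⁽ʳ⁾(m), L̄⁽ˢ⁾(−m)] − c_{r,s}·m^{2r+2s+3}·id_S lies in the ℂ-linear span of {L̄⁽ᵖ⁾(0) : p ∈ ℕ}; that is, after the zeta-function modification the central term of the bracket is a pure monomial in m of degree 2r+2s+3. -/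

import Mathlib

/-!
Write `N = r + s + 1`. Commuting with the Heisenberg generators gives
`[L⁽ʳ⁾(n), h(k)] = (-k)^{r+1} (n+k)^r h(n+k)` (`LR_comm`). By the Jacobi identity the bracket
`D = [L⁽ʳ⁾(m), L⁽ˢ⁾(-m)]` satisfies `[D, h(k)] = -(f(k) - f(-k)) h(k)` with
`f = Xᴺ (m - X)ᴺ` (`bracket_hOp`). Since `[L⁽ᵖ⁾(0), h(k)] = (-1)^{p+1} k^{2p+1} h(k)` and
`f(k) - f(-k)` is odd in `k`, some combination `∑ aₚ L⁽ᵖ⁾(0)` has the same commutators with all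
`h(k)`. An operator commuting with all `h(k)` is a scalar (`eq_scalar`), and the scalar is read
off on the vacuum `1`: for `m > 0`,
`D = ∑ aₚ L⁽ᵖ⁾(0) + (1/2) ∑_{0<i≤m} f(i)` (`bracket_eq`).

Passing to the modified zero modes subtracts `(1/2) Z(f(X) - f(-X))`, where `Z` is the linear
functional `Xʲ ↦ ζ(-j)`. As `f(-X) = f(X + m)`, this is a telescoping sum for the zeta
regularisation, and the recursion for the Bernoulli numbers gives
`Z(f) - Z(f(X + m)) = ∑_{0<i≤m} f(i) - ∫₀ᵐ f` (`zetaReg_shift`). Only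
`(1/2) ∫₀ᵐ xᴺ (m - x)ᴺ dx = (1/2) m^{2N+1} ∫₀¹ xᴺ (1 - x)ᴺ dx` survives, and `2N+1 = 2r+2s+3`.
This constant is symmetric in `r` and `s`, so negative `m` follows by antisymmetry.
-/

noncomputable section

/-- The polynomial algebra `S = ℂ[a₁,a₂,a₃,…]`, with variables indexed by `ℕ+`. -/
abbrev SS : Type := MvPolynomial ℕ+ ℂ

/-- The Heisenberg operators `h(n)` on `S`: for `n < 0`, multiplication by `a₋ₙ`;
for `n > 0`, `n·∂/∂aₙ`; and `h(0) = 0`. -/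
noncomputable def hOp (n : ℤ) : Module.End ℂ SS :=
  if _h1 : 0 < n then
    (n : ℂ) • (MvPolynomial.pderiv (R := ℂ) (⟨n.toNat, by omega⟩ : ℕ+)).toLinearMap
  else if _h2 : n < 0 then
    LinearMap.mulLeft ℂ (MvPolynomial.X (⟨(-n).toNat, by omega⟩ : ℕ+))
  else 0

/-- The normally ordered product `:h(i)h(j):`  (equal to `h(i)∘h(j)` if `i ≤ j`,
and to `h(j)∘h(i)` if `i > j`; note `f * g` is composition in `Module.End`). -/
noncomputable def nord (i j : ℤ) : Module.End ℂ SS :=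
  if i ≤ j then hOp i * hOp j else hOp j * hOp i

/-! ### Heisenberg operators and normal ordering -/

theorem hOp_pnat (n : ℕ+) (p : SS) :
    hOp (n : ℤ) p = ((n : ℕ) : ℂ) • MvPolynomial.pderiv n p := by
  have h : (0 : ℤ) < (n : ℤ) := by exact_mod_cast n.pos
  have e : (⟨((n : ℕ) : ℤ).toNat, by omega⟩ : ℕ+) = n := by
    apply PNat.eq; simp
  have e2 : hOp (n : ℤ) = (((n : ℕ) : ℤ) : ℂ) • (MvPolynomial.pderiv (R := ℂ)
      (⟨((n : ℕ) : ℤ).toNat, by omega⟩ : ℕ+)).toLinearMap := dif_pos h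
  rw [e2, e, Int.cast_natCast]
  rfl

theorem hOp_neg_pnat (n : ℕ+) (p : SS) :
    hOp (-(n : ℤ)) p = MvPolynomial.X n * p := by
  have h : (0 : ℤ) < (n : ℤ) := by exact_mod_cast n.pos
  have e : (⟨(-(-((n : ℕ) : ℤ))).toNat, by omega⟩ : ℕ+) = n := by
    apply PNat.eq; simp
  have h1 : ¬ (0 : ℤ) < -(n : ℤ) := by omega
  have h2 : -(n : ℤ) < 0 := by omega
  have e2 : hOp (-(n : ℤ)) = LinearMap.mulLeft ℂ (MvPolynomial.X
      (⟨(-(-((n : ℕ) : ℤ))).toNat, by omega⟩ : ℕ+) : SS) := (dif_neg h1).trans (dif_pos h2)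
  rw [e2, e]
  rfl

theorem hOp_zero : hOp 0 = 0 := by simp [hOp]

theorem int_cases (k : ℤ) : k = 0 ∨ (∃ n : ℕ+, k = n) ∨ ∃ n : ℕ+, k = -(n : ℤ) := by
  rcases lt_trichotomy k 0 with h | h | h
  · exact Or.inr (Or.inr ⟨⟨(-k).toNat, by omega⟩, by simp; omega⟩)
  · exact Or.inl h
  · exact Or.inr (Or.inl ⟨⟨k.toNat, by omega⟩, by simp; omega⟩)

theorem pderiv_comm (a b : ℕ+) (p : SS) :
    MvPolynomial.pderiv a (MvPolynomial.pderiv b p)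
      = MvPolynomial.pderiv b (MvPolynomial.pderiv a p) := by
  have h : ⁅(MvPolynomial.pderiv a : Derivation ℂ SS SS),
      (MvPolynomial.pderiv b : Derivation ℂ SS SS)⁆ = 0 := by
    apply MvPolynomial.derivation_ext
    intro i
    by_cases ha : i = a <;> by_cases hb : i = b <;>
      simp [Derivation.commutator_apply, MvPolynomial.pderiv_X, ha, hb, Pi.single_apply,
        apply_ite]
  have := congrArg (fun D : Derivation ℂ SS SS => D p) h
  simpa [Derivation.commutator_apply, sub_eq_zero] using this

/-- The Heisenberg relations `[h(i), h(j)] = i δ_{i+j,0}`. -/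
theorem hOp_comm (i j : ℤ) :
    hOp i * hOp j = hOp j * hOp i + (if i + j = 0 then (i : ℂ) else 0) • 1 := by
  apply LinearMap.ext
  intro p
  simp only [Module.End.mul_apply, LinearMap.add_apply, LinearMap.smul_apply,
    Module.End.one_apply]
  rcases int_cases i with rfl | ⟨a, rfl⟩ | ⟨a, rfl⟩ <;>
    rcases int_cases j with rfl | ⟨b, rfl⟩ | ⟨b, rfl⟩
  · simp [hOp_zero]
  · simp [hOp_zero]
  · simp [hOp_zero]
  · simp [hOp_zero]
  · have : ¬ ((a : ℤ) + b = 0) := by have := a.pos; have := b.pos; omega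
    simp only [hOp_pnat, this, if_false, map_smul, zero_smul, add_zero]
    rw [smul_comm, pderiv_comm]
  · simp only [hOp_pnat, hOp_neg_pnat, Derivation.leibniz, MvPolynomial.pderiv_X]
    by_cases h : a = b
    · subst h
      simp [smul_add]
    · have : ¬ ((a : ℤ) + -(b : ℤ) = 0) := by
        intro h'; apply h; apply PNat.eq; omega
      have h2 : b ≠ a := fun h' => h h'.symm
      simp [this, h2]
  · simp [hOp_zero]
  · simp only [hOp_pnat, hOp_neg_pnat, Derivation.leibniz, MvPolynomial.pderiv_X]
    by_cases h : a = b
    · subst h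
      simp [smul_add]
    · have : ¬ (-(a : ℤ) + (b : ℤ) = 0) := by
        intro h'; apply h; apply PNat.eq; omega
      simp [this, h]
  · have : ¬ (-(a : ℤ) + -(b : ℤ) = 0) := by have := a.pos; have := b.pos; omega
    simp only [hOp_neg_pnat, this, if_false, zero_smul, add_zero]
    ring

theorem hOp_one {n : ℤ} (hn : 0 ≤ n) : hOp n 1 = 0 := by
  rcases int_cases n with rfl | ⟨a, rfl⟩ | ⟨a, rfl⟩
  · simp [hOp_zero]
  · simp [hOp_pnat]
  · have := a.pos
    omega

theorem nord_one {i j : ℤ} (h : 0 ≤ i ∨ 0 ≤ j) : nord i j 1 = 0 := by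
  unfold nord
  split_ifs with hij <;> rw [Module.End.mul_apply, hOp_one (by omega), map_zero]

/-- `h(n)` annihilates `p` as soon as `n` exceeds the index of every variable in `p`. -/
theorem exists_bound (p : SS) : ∃ B : ℤ, ∀ n : ℤ, B < n → hOp n p = 0 := by
  obtain ⟨B, hB⟩ := (p.vars.image (fun n : ℕ+ => (n : ℤ))).bddAbove
  refine ⟨max B 0, fun n hn => ?_⟩
  rcases int_cases n with rfl | ⟨a, rfl⟩ | ⟨a, rfl⟩
  · simp [hOp_zero]
  · rw [hOp_pnat, MvPolynomial.pderiv_eq_zero_of_notMem_vars, smul_zero]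
    intro ha
    have := hB (Finset.mem_coe.2 (Finset.mem_image_of_mem _ ha))
    have := (max_lt_iff.1 hn).1
    omega
  · have := a.pos
    have := (max_lt_iff.1 hn).2
    omega

/-- Local finiteness of the sums defining `L⁽ʳ⁾(n)`. -/
theorem nord_finite (n : ℤ) (p : SS) (c : ℤ → ℂ) :
    (Function.support fun j : ℤ => c j • nord j (n - j) p).Finite := by
  obtain ⟨B, hB⟩ := exists_bound p
  apply (Set.finite_Icc (n - B) B).subset
  intro j hj
  by_contra hc
  apply hj
  have : nord j (n - j) p = 0 := by
    rw [Set.mem_Icc, not_and_or] at hc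
    unfold nord
    split_ifs with h <;> rw [Module.End.mul_apply, hB _ (by omega), map_zero]
  simp [this]

/-- Normal ordering changes a product by a scalar only, so it is invisible to commutators. -/
theorem nord_comm (i j k : ℤ) :
    nord i j * hOp k = hOp k * nord i j + (if j + k = 0 then (j : ℂ) else 0) • hOp i
      + (if i + k = 0 then (i : ℂ) else 0) • hOp j := by
  have key : ∀ i j : ℤ, hOp i * hOp j * hOp k = hOp k * (hOp i * hOp j)
      + (if j + k = 0 then (j : ℂ) else 0) • hOp i
      + (if i + k = 0 then (i : ℂ) else 0) • hOp j := by
    intro i j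
    rw [mul_assoc, hOp_comm j k, mul_add, ← mul_assoc, hOp_comm i k, add_mul, mul_assoc]
    simp only [mul_smul_comm, smul_mul_assoc, mul_one, one_mul]
    abel
  unfold nord
  split_ifs <;> simp only [key] <;> simp_all
  all_goals abel

/-- `[L⁽ʳ⁾(n), h(k)] = (-k)^{r+1} (n+k)^r h(n+k)`: the whole operator calculus rests on this. -/
theorem LR_comm (LR : ℕ → ℤ → Module.End ℂ SS)
    (hLR : ∀ (r : ℕ) (n : ℤ) (p : SS), LR r n p
      = (1 / 2 : ℂ) •
          ∑ᶠ j : ℤ, ((j : ℂ) ^ r * ((n : ℂ) - (j : ℂ)) ^ r) • nord j (n - j) p)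
    (r : ℕ) (n k : ℤ) :
    LR r n * hOp k
      = hOp k * LR r n + ((-(k : ℂ)) ^ (r + 1) * ((n : ℂ) + k) ^ r) • hOp (n + k) := by
  apply LinearMap.ext
  intro p
  simp only [Module.End.mul_apply, LinearMap.add_apply, LinearMap.smul_apply, hLR, map_smul]
  set c : ℤ → ℂ := fun j => (j : ℂ) ^ r * ((n : ℂ) - (j : ℂ)) ^ r with hc
  -- `u` and `v` collect the two contractions; each is supported at a single index.
  set u : ℤ → SS := fun j => if j = n + k then (c j * (n - j)) • hOp j p else 0 with hu
  set v : ℤ → SS := fun j => if j = -k then (c j * j) • hOp (n - j) p else 0 with hv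
  have h1 : (fun j : ℤ => c j • nord j (n - j) (hOp k p))
      = fun j => (hOp k (c j • nord j (n - j) p) + u j) + v j := by
    funext j
    have := congrArg (fun T : Module.End ℂ SS => c j • T p) (nord_comm j (n - j) k)
    simp only [Module.End.mul_apply, LinearMap.add_apply, LinearMap.smul_apply] at this
    rw [this, map_smul, smul_add, smul_add]
    congr 1
    · congr 1
      by_cases h : j = n + k
      · have h' : n - j + k = 0 := by omega
        simp only [hu, if_pos h, if_pos h', smul_smul]
        push_cast; rfl
      · have h' : ¬ n - j + k = 0 := by omega
        simp only [hu, if_neg h, if_neg h', zero_smul, smul_zero]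
    · by_cases h : j = -k
      · have h' : j + k = 0 := by omega
        simp only [hv, if_pos h, if_pos h', smul_smul]
      · have h' : ¬ j + k = 0 := by omega
        simp only [hv, if_neg h, if_neg h', zero_smul, smul_zero]
  have fu : (Function.support u).Finite := by
    apply (Set.finite_singleton (n + k)).subset
    intro j hj
    by_contra h
    exact hj (if_neg h)
  have fv : (Function.support v).Finite := by
    apply (Set.finite_singleton (-k)).subset
    intro j hj
    by_contra h
    exact hj (if_neg h)
  have fn := nord_finite n p c
  have fh : (Function.support fun j => hOp k (c j • nord j (n - j) p)).Finite := by
    apply fn.subset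
    intro j hj h
    apply hj
    simp only at h ⊢
    rw [h, map_zero]
  have fhu : (Function.support fun j => hOp k (c j • nord j (n - j) p) + u j).Finite :=
    (fh.union fu).subset (Function.support_add _ _)
  rw [h1, finsum_add_distrib fhu fv, finsum_add_distrib fh fu,
    finsum_eq_single u (n + k) (fun j hj => if_neg hj),
    finsum_eq_single v (-k) (fun j hj => if_neg hj)]
  have hm : hOp k (∑ᶠ j, c j • nord j (n - j) p) = ∑ᶠ j, hOp k (c j • nord j (n - j) p) :=
    AddMonoidHom.map_finsum (hOp k).toAddMonoidHom fn
  rw [hm]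
  simp only [hu, hv, if_true, sub_neg_eq_add, hc]
  rw [smul_add, smul_add, add_assoc]
  congr 1
  rw [smul_smul, smul_smul, ← add_smul]
  congr 1
  push_cast
  ring

/-! ### Zeta regularisation of polynomial sums -/

open Polynomial in
/-- Zeta regularisation of `∑_{k ≥ 1} f(k)` for a polynomial `f`: the linear functional
`Xʲ ↦ ζ(-j)`. -/
def zetaReg : ℂ[X] →ₗ[ℂ] ℂ :=
  Polynomial.lsum fun j : ℕ => riemannZeta (-(j : ℂ)) • LinearMap.id

open Polynomial in
theorem zetaReg_monomial (j : ℕ) (a : ℂ) :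
    zetaReg (monomial j a) = riemannZeta (-(j : ℂ)) * a := by
  simp [zetaReg, Polynomial.lsum]

/-- The recursion of the Bernoulli numbers, in terms of zeta values. -/
theorem zeta_recursion (j : ℕ) :
    ∑ i ∈ Finset.range j, (j.choose i : ℂ) * riemannZeta (-(i : ℂ)) = 1 / ((j : ℂ) + 1) - 1 := by
  have h := sum_bernoulli' (j + 1)
  rw [Finset.sum_range_succ'] at h
  have h' := congrArg (fun q : ℚ => (q : ℂ)) h
  simp only [bernoulli'_zero] at h'
  push_cast at h'
  have hj : (j : ℂ) + 1 ≠ 0 := by exact_mod_cast Nat.succ_ne_zero j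
  have e : ∀ i : ℕ, ((j + 1).choose (i + 1) : ℂ) * (bernoulli' (i + 1) : ℂ)
      = -((j : ℂ) + 1) * ((j.choose i : ℂ) * riemannZeta (-(i : ℂ))) := by
    intro i
    have hi : (i : ℂ) + 1 ≠ 0 := by exact_mod_cast Nat.succ_ne_zero i
    have hc : ((j : ℂ) + 1) * (j.choose i : ℂ) = ((j + 1).choose (i + 1) : ℂ) * ((i : ℂ) + 1) := by
      exact_mod_cast Nat.add_one_mul_choose_eq j i
    rw [riemannZeta_neg_nat_eq_bernoulli']
    field_simp
    linear_combination (-(bernoulli' (i + 1) : ℂ)) * hc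
  rw [Finset.sum_congr rfl fun i _ => e i, ← Finset.mul_sum] at h'
  simp only [Nat.choose_zero_right, Nat.cast_one, mul_one] at h'
  field_simp
  linear_combination -h'

open Polynomial in
/-- The defect of shift-invariance of the zeta regularisation is an integral. -/
theorem zetaReg_shift_one (f : ℂ[X]) :
    zetaReg f - zetaReg (taylor 1 f) = f.eval 1 - ∫ x in (0 : ℝ)..1, f.eval (x : ℂ) := by
  induction f using Polynomial.induction_on' with
  | add p q hp hq =>
    simp only [map_add, eval_add]
    rw [intervalIntegral.integral_add
      (Continuous.intervalIntegrable (by fun_prop) _ _)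
      (Continuous.intervalIntegrable (by fun_prop) _ _)]
    linear_combination hp + hq
  | monomial j a =>
    have hj : (j : ℂ) + 1 ≠ 0 := by exact_mod_cast Nat.succ_ne_zero j
    have ht : taylor 1 (monomial j a)
        = ∑ i ∈ Finset.range (j + 1), monomial i (a * (j.choose i : ℂ)) := by
      rw [taylor_monomial, add_pow, Finset.mul_sum]
      refine Finset.sum_congr rfl fun i _ => ?_
      rw [← C_mul_X_pow_eq_monomial]
      simp only [C_1, one_pow, mul_one, C_mul, map_natCast]
      ring
    have hi : ∫ x in (0 : ℝ)..1, (monomial j a).eval (x : ℂ) = a * (1 / ((j : ℂ) + 1)) := by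
      simp only [eval_monomial, intervalIntegral.integral_const_mul]
      congr 1
      have := integral_pow (a := 0) (b := 1) j
      have h2 : ∫ x in (0 : ℝ)..1, ((x ^ j : ℝ) : ℂ) = ((∫ x in (0 : ℝ)..1, x ^ j : ℝ) : ℂ) :=
        intervalIntegral.integral_ofReal
      push_cast at h2
      rw [h2, this]
      push_cast
      simp
    rw [ht, hi, map_sum]
    simp only [zetaReg_monomial, eval_monomial, one_pow, mul_one]
    rw [Finset.sum_range_succ, Finset.sum_congr rfl fun (i : ℕ) _ =>
      (show riemannZeta (-(i : ℂ)) * (a * (j.choose i : ℂ))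
        = a * ((j.choose i : ℂ) * riemannZeta (-(i : ℂ))) by ring), ← Finset.mul_sum,
      zeta_recursion]
    simp
    ring

open Polynomial in
/-- Zeta regularisation against an honest telescoping sum: the two differ by `∫₀ᵐ f`. -/
theorem zetaReg_shift (f : ℂ[X]) (m : ℕ) :
    zetaReg f - zetaReg (taylor (m : ℂ) f)
      = ∑ i ∈ Finset.range m, f.eval ((i : ℂ) + 1) - ∫ x in (0 : ℝ)..m, f.eval (x : ℂ) := by
  induction m with
  | zero => simp
  | succ m ih =>
    have h := zetaReg_shift_one (taylor (m : ℂ) f)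
    rw [taylor_taylor, taylor_eval] at h
    simp only [taylor_eval] at h
    have hs : ∫ x in (0 : ℝ)..1, f.eval ((x : ℂ) + m) = ∫ x in (m : ℝ)..(m + 1), f.eval (x : ℂ) := by
      have := intervalIntegral.integral_comp_add_right (a := 0) (b := 1)
        (fun x : ℝ => f.eval (x : ℂ)) (m : ℝ)
      simp only [zero_add] at this
      rw [add_comm (1 : ℝ)] at this
      rw [← this]
      simp
    have ha := intervalIntegral.integral_add_adjacent_intervals (μ := MeasureTheory.volume)
      (f := fun x : ℝ => f.eval (x : ℂ)) (a := 0) (b := m) (c := m + 1)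
      (Continuous.intervalIntegrable (by fun_prop) _ _)
      (Continuous.intervalIntegrable (by fun_prop) _ _)
    rw [Finset.sum_range_succ]
    push_cast
    rw [← ha, ← hs, add_comm (m : ℂ) 1]
    linear_combination ih + h

/-- Twice the odd part of a polynomial with coefficients `a`, paired with an
arbitrary functional `Xʲ ↦ φ j`. -/
theorem odd_part_sum (a φ : ℕ → ℂ) (M : ℕ) :
    ∑ j ∈ Finset.range (2 * M), a j * φ j - ∑ j ∈ Finset.range (2 * M), (-1) ^ j * a j * φ j
      = ∑ p ∈ Finset.range M, 2 * a (2 * p + 1) * φ (2 * p + 1) := by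
  induction M with
  | zero => simp
  | succ M ih =>
    rw [show 2 * (M + 1) = 2 * M + 1 + 1 by ring]
    simp only [Finset.sum_range_succ]
    rw [← ih]
    simp [pow_succ, pow_mul]
    ring

open Polynomial in
theorem zetaReg_eq_sum (f : ℂ[X]) {n : ℕ} (h : f.natDegree < n) :
    zetaReg f = ∑ j ∈ Finset.range n, f.coeff j * riemannZeta (-(j : ℂ)) := by
  conv_lhs => rw [f.as_sum_range' n h]
  rw [map_sum]
  exact Finset.sum_congr rfl fun j _ => by rw [zetaReg_monomial, mul_comm]

open Polynomial in
/-- The polynomial `Xᴺ (m - X)ᴺ`, which is both the contraction weight of the central term and,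
after antisymmetrisation, the eigenvalue of the bracket on `h(k)`. -/
def wt (N : ℕ) (m : ℂ) : ℂ[X] := X ^ N * (C m - X) ^ N

open Polynomial in
theorem wt_eval (N : ℕ) (m k : ℂ) : (wt N m).eval k = k ^ N * (m - k) ^ N := by
  simp [wt]

open Polynomial in
theorem wt_natDegree (N : ℕ) (m : ℂ) : (wt N m).natDegree < 2 * (N + 1) := by
  have h1 : (C m - X : ℂ[X]).natDegree ≤ 1 := by compute_degree
  have h2 : (wt N m).natDegree ≤ N + N * 1 :=
    natDegree_mul_le.trans (add_le_add (natDegree_X_pow_le N)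
      (natDegree_pow_le.trans (Nat.mul_le_mul_left N h1)))
  omega

open Polynomial in
theorem comp_neg_X_coeff (f : ℂ[X]) (j : ℕ) : (f.comp (-X)).coeff j = (-1) ^ j * f.coeff j := by
  have h := comp_C_mul_X_coeff (p := f) (r := -1) (n := j)
  simp only [map_neg, map_one, neg_mul, one_mul] at h
  rw [h, mul_comm]

open Polynomial in
/-- Twice the odd part of `Xᴺ (m - X)ᴺ`, evaluated at `k`. -/
theorem wt_eigen (N : ℕ) (m k : ℂ) :
    ∑ p ∈ Finset.range (N + 1), 2 * (wt N m).coeff (2 * p + 1) * k ^ (2 * p + 1)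
      = k ^ N * (m - k) ^ N - (-k) ^ N * (m + k) ^ N := by
  rw [← odd_part_sum (fun j => (wt N m).coeff j) (fun j => k ^ j), ← sub_neg_eq_add m k, ← wt_eval,
    ← wt_eval, eval_eq_sum_range' (wt_natDegree N m), eval_eq_sum_range' (wt_natDegree N m)]
  congr 1
  refine Finset.sum_congr rfl fun j _ => ?_
  rw [neg_pow k]
  ring

open Polynomial in
/-- The zeta corrections of the zero modes turn the vacuum value of the bracket into the Beta
integral `∫₀ᵐ xᴺ (m - x)ᴺ dx`, a pure monomial in `m`. -/
theorem wt_zeta (N m : ℕ) (hm : 0 < m) :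
    ∑ p ∈ Finset.range (N + 1), 2 * (wt N m).coeff (2 * p + 1) * riemannZeta (-(2 * (p : ℂ)) - 1)
      = ∑ i ∈ Finset.range m, ((i : ℂ) + 1) ^ N * (m - ((i : ℂ) + 1)) ^ N
        - (∫ x in (0 : ℝ)..1, (x : ℂ) ^ N * (1 - (x : ℂ)) ^ N) * (m : ℂ) ^ (2 * N + 1) := by
  -- `f(m + x) = f(-x)` for `f = Xᴺ (m - X)ᴺ`, so only the odd part of `f` matters.
  have hcomp : taylor (m : ℂ) (wt N m) = (wt N m).comp (-X) := by
    rw [taylor_apply]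
    simp only [wt, mul_comp, pow_comp, X_comp, sub_comp, C_comp]
    rw [← mul_pow, ← mul_pow]
    congr 1
    ring
  have hint : ∫ x in (0 : ℝ)..m, (wt N m).eval (x : ℂ)
      = (∫ x in (0 : ℝ)..1, (x : ℂ) ^ N * (1 - (x : ℂ)) ^ N) * (m : ℂ) ^ (2 * N + 1) := by
    have hm' : (m : ℝ) ≠ 0 := by exact_mod_cast hm.ne'
    have := intervalIntegral.smul_integral_comp_mul_left (a := 0) (b := 1)
      (fun x : ℝ => (wt N m).eval (x : ℂ)) (m : ℝ)
    rw [mul_zero, mul_one] at this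
    rw [← this, ← intervalIntegral.integral_smul, ← intervalIntegral.integral_mul_const]
    congr 1
    funext x
    rw [wt_eval, Complex.real_smul]
    push_cast
    rw [show (m : ℂ) - m * x = m * (1 - x) by ring, mul_pow, mul_pow]
    ring
  have h := zetaReg_shift (wt N m) m
  rw [hcomp, hint, zetaReg_eq_sum _ (wt_natDegree N m),
    zetaReg_eq_sum ((wt N m).comp (-X)) (n := 2 * (N + 1))
      (by rw [natDegree_comp, natDegree_neg, natDegree_X, mul_one]; exact wt_natDegree N m)] at h
  simp only [comp_neg_X_coeff, wt_eval] at h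
  rw [← h, odd_part_sum (fun j => (wt N m).coeff j) (fun j => riemannZeta (-(j : ℂ)))]
  refine Finset.sum_congr rfl fun p _ => ?_
  push_cast
  rw [neg_add, sub_eq_add_neg]

/-! ### The bracket and its vacuum value -/

/-- `neg_smul` for `Module.End ℂ SS`, where rewriting with the general lemma fails to unify the
instances. -/
theorem end_neg_smul (c : ℂ) (T : Module.End ℂ SS) : (-c) • T = -(c • T) :=
  neg_smul c T

/-- `sub_smul` for `Module.End ℂ SS`, for the same reason as `end_neg_smul`. -/
theorem end_sub_smul (c d : ℂ) (T : Module.End ℂ SS) : (c - d) • T = c • T - d • T :=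
  sub_smul c d T

/-- An operator commuting with every `h(k)` and acting on the vacuum by the scalar `κ` is `κ`:
`S` is generated from `1` by the creation operators. -/
theorem eq_scalar (E : Module.End ℂ SS) (κ : ℂ) (h1 : E 1 = κ • 1)
    (hc : ∀ k : ℤ, E * hOp k = hOp k * E) : E = κ • 1 := by
  apply LinearMap.ext
  intro p
  rw [LinearMap.smul_apply, Module.End.one_apply]
  induction p using MvPolynomial.induction_on with
  | C a =>
    rw [← mul_one (MvPolynomial.C a), ← MvPolynomial.smul_eq_C_mul, map_smul, h1, smul_comm]
  | add p q hp hq => rw [map_add, hp, hq, smul_add]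
  | mul_X p n hp =>
    have := congrArg (fun T : Module.End ℂ SS => T p) (hc (-(n : ℤ)))
    simp only [Module.End.mul_apply, hOp_neg_pnat] at this
    rw [mul_comm p, this, hp, mul_smul_comm]

theorem LR_one
    (LR : ℕ → ℤ → Module.End ℂ SS)
    (hLR : ∀ (r : ℕ) (n : ℤ) (p : SS), LR r n p
      = (1 / 2 : ℂ) •
          ∑ᶠ j : ℤ, ((j : ℂ) ^ r * ((n : ℂ) - (j : ℂ)) ^ r) • nord j (n - j) p)
    (r : ℕ) {n : ℤ} (hn : 0 ≤ n) : LR r n 1 = 0 := by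
  rw [hLR]
  have : ∀ j : ℤ, ((j : ℂ) ^ r * ((n : ℂ) - (j : ℂ)) ^ r) • nord j (n - j) 1 = 0 := by
    intro j
    rw [nord_one (by omega), smul_zero]
  simp only [this, finsum_zero, smul_zero]

/-- Each `h(k)` is an eigenvector of the adjoint action of the bracket. The eigenvalue is an odd
polynomial in `k`, as are those of the zero modes. -/
theorem bracket_hOp
    (LR : ℕ → ℤ → Module.End ℂ SS)
    (hLR : ∀ (r : ℕ) (n : ℤ) (p : SS), LR r n p
      = (1 / 2 : ℂ) •
          ∑ᶠ j : ℤ, ((j : ℂ) ^ r * ((n : ℂ) - (j : ℂ)) ^ r) • nord j (n - j) p)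
    (r s : ℕ) (m k : ℤ) :
    (LR r m * LR s (-m) - LR s (-m) * LR r m) * hOp k
      = hOp k * (LR r m * LR s (-m) - LR s (-m) * LR r m)
        - ((k : ℂ) ^ (r + s + 1) * (m - k) ^ (r + s + 1)
            - (-(k : ℂ)) ^ (r + s + 1) * (m + k) ^ (r + s + 1)) • hOp k := by
  have A := fun k => LR_comm LR hLR r m k
  have B := fun k => LR_comm LR hLR s (-m) k
  rw [sub_mul, mul_assoc, B, mul_assoc, A, mul_add, mul_add, ← mul_assoc, A k, ← mul_assoc, B k,
    mul_smul_comm, mul_smul_comm, A, B, show m + (-m + k) = k by ring,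
    show -m + (m + k) = k by ring]
  simp only [add_mul, smul_mul_assoc, smul_add, mul_sub, smul_smul, mul_assoc]
  have hcoef : (-(k : ℂ)) ^ (s + 1) * (((-m : ℤ) : ℂ) + k) ^ s
        * ((-((-m + k : ℤ) : ℂ)) ^ (r + 1) * ((m : ℂ) + ((-m + k : ℤ) : ℂ)) ^ r)
      - (-(k : ℂ)) ^ (r + 1) * ((m : ℂ) + k) ^ r
        * ((-((m + k : ℤ) : ℂ)) ^ (s + 1) * (((-m : ℤ) : ℂ) + ((m + k : ℤ) : ℂ)) ^ s)
      = -((k : ℂ) ^ (r + s + 1) * (m - k) ^ (r + s + 1)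
            - (-(k : ℂ)) ^ (r + s + 1) * (m + k) ^ (r + s + 1)) := by
    push_cast
    have e1 : (-(m : ℂ) + k) = -(m - k) := by ring
    have e2 : (m : ℂ) + (-(m - k)) = k := by ring
    have e3 : -(m : ℂ) + (m + k) = k := by ring
    rw [e1, e2, e3, neg_neg, neg_pow (k : ℂ) (s + 1), neg_pow ((m : ℂ) - k) s,
      neg_pow (k : ℂ) (r + 1), neg_pow ((m : ℂ) + k) (s + 1), neg_pow (k : ℂ) (r + s + 1)]
    have e4 : ((-1 : ℂ) ^ s) * (-1) ^ s = 1 := by rw [← mul_pow]; simp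
    simp only [pow_add, pow_one]
    linear_combination (-(k : ℂ) ^ s * k * (m - k) ^ s * (m - k) ^ r * (m - k) * k ^ r) * e4
  rw [← sub_eq_zero]
  have h3 := congrArg (fun c : ℂ => c • hOp k) hcoef
  simp only [end_sub_smul, end_neg_smul] at h3
  simp only [end_sub_smul]
  rw [← sub_eq_zero] at h3
  rw [← h3]
  simp only [mul_assoc]
  abel

/-- The two contractions of `L⁽ʳ⁾(m)` with `h(i) h(j)` when `i + j = -m`. -/
theorem LR_hOp_hOp
    (LR : ℕ → ℤ → Module.End ℂ SS)
    (hLR : ∀ (r : ℕ) (n : ℤ) (p : SS), LR r n p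
      = (1 / 2 : ℂ) •
          ∑ᶠ j : ℤ, ((j : ℂ) ^ r * ((n : ℂ) - (j : ℂ)) ^ r) • nord j (n - j) p)
    (r : ℕ) {m i j : ℤ} (hm : 0 ≤ m) (hi : i ≤ 0) (hj : j ≤ 0)
    (hij : i + j = -m) :
    LR r m (hOp i (hOp j 1)) = ((-(i : ℂ)) ^ (r + 1) * (-(j : ℂ)) ^ (r + 1)) • 1 := by
  have A := fun k p => congrArg (fun T : Module.End ℂ SS => T p) (LR_comm LR hLR r m k)
  simp only [Module.End.mul_apply, LinearMap.add_apply, LinearMap.smul_apply] at A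
  have hH := congrArg (fun T : Module.End ℂ SS => T 1) (hOp_comm (m + i) j)
  simp only [Module.End.mul_apply, LinearMap.add_apply, LinearMap.smul_apply,
    Module.End.one_apply] at hH
  rw [A, A, LR_one LR hLR r hm, hH, hOp_one (n := m + i) (by omega),
    hOp_one (n := m + j) (by omega), if_pos (by omega)]
  simp only [map_zero, smul_zero, zero_add]
  have hmi : (m : ℂ) + i = -j := by
    have : m + i = -j := by omega
    exact_mod_cast this
  rw [smul_smul]
  congr 1
  push_cast
  rw [hmi, pow_succ (-(j : ℂ)), mul_assoc]

theorem LR_nord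
    (LR : ℕ → ℤ → Module.End ℂ SS)
    (hLR : ∀ (r : ℕ) (n : ℤ) (p : SS), LR r n p
      = (1 / 2 : ℂ) •
          ∑ᶠ j : ℤ, ((j : ℂ) ^ r * ((n : ℂ) - (j : ℂ)) ^ r) • nord j (n - j) p)
    (r : ℕ) {m i j : ℤ} (hm : 0 ≤ m) (hi : i ≤ 0) (hj : j ≤ 0)
    (hij : i + j = -m) :
    LR r m (nord i j 1) = ((-(i : ℂ)) ^ (r + 1) * (-(j : ℂ)) ^ (r + 1)) • 1 := by
  unfold nord
  split_ifs
  · exact LR_hOp_hOp LR hLR r hm hi hj hij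
  · rw [Module.End.mul_apply, LR_hOp_hOp LR hLR r hm hj hi (by omega), mul_comm]

/-- The vacuum expectation value of the bracket. -/
theorem bracket_one
    (LR : ℕ → ℤ → Module.End ℂ SS)
    (hLR : ∀ (r : ℕ) (n : ℤ) (p : SS), LR r n p
      = (1 / 2 : ℂ) •
          ∑ᶠ j : ℤ, ((j : ℂ) ^ r * ((n : ℂ) - (j : ℂ)) ^ r) • nord j (n - j) p)
    (r s m : ℕ) :
    (LR r m * LR s (-m) - LR s (-m) * LR r m) 1
      = ((1 / 2 : ℂ) * ∑ i ∈ Finset.range m,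
          ((i : ℂ) + 1) ^ (r + s + 1) * (m - ((i : ℂ) + 1)) ^ (r + s + 1)) • 1 := by
  rw [LinearMap.sub_apply, Module.End.mul_apply, Module.End.mul_apply,
    LR_one LR hLR r (Int.natCast_nonneg m), map_zero, sub_zero, hLR s, map_smul, mul_smul]
  congr 1
  rw [finsum_eq_sum_of_support_subset (s := (Finset.range m).image fun i : ℕ => -((i : ℤ) + 1)),
    Finset.sum_image, map_sum, Finset.sum_smul]
  · refine Finset.sum_congr rfl fun i hi => ?_
    have := Finset.mem_range.1 hi
    rw [map_smul, LR_nord LR hLR r (by omega) (by omega) (by omega) (by omega), smul_smul]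
    congr 1
    push_cast
    have e1 : -(m : ℂ) - -((i : ℂ) + 1) = -(m - (i + 1)) := by ring
    rw [e1, neg_neg, neg_neg, neg_pow, neg_pow ((m : ℂ) - (i + 1))]
    have e4 : ((-1 : ℂ) ^ s) * (-1) ^ s = 1 := by rw [← mul_pow]; simp
    simp only [pow_add, pow_one]
    linear_combination (((i : ℂ) + 1) ^ s * (m - (i + 1)) ^ s * ((i + 1) ^ r * (i + 1))
      * ((m - (i + 1)) ^ r * (m - (i + 1)))) * e4
  · intro a _ b _ h
    simp only at h
    omega
  · intro j hj
    by_contra hc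
    apply hj
    have : 0 ≤ j ∨ 0 ≤ -(m : ℤ) - j := by
      by_contra h
      apply hc
      simp only [Finset.coe_image, Set.mem_image, Finset.coe_range, Set.mem_Iio]
      exact ⟨(-j - 1).toNat, by omega, by omega⟩
    simp only [nord_one this, smul_zero]

/-- The bracket, for `m ≥ 0`, in terms of the unmodified zero modes. -/
theorem bracket_eq
    (LR : ℕ → ℤ → Module.End ℂ SS)
    (hLR : ∀ (r : ℕ) (n : ℤ) (p : SS), LR r n p
      = (1 / 2 : ℂ) •
          ∑ᶠ j : ℤ, ((j : ℂ) ^ r * ((n : ℂ) - (j : ℂ)) ^ r) • nord j (n - j) p)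
    (r s m : ℕ) :
    LR r m * LR s (-m) - LR s (-m) * LR r m
      = ∑ p ∈ Finset.range (r + s + 1 + 1),
          ((-1) ^ p * (2 * (wt (r + s + 1) m).coeff (2 * p + 1))) • LR p 0
        + ((1 / 2 : ℂ) * ∑ i ∈ Finset.range m,
          ((i : ℂ) + 1) ^ (r + s + 1) * (m - ((i : ℂ) + 1)) ^ (r + s + 1)) • 1 := by
  rw [← sub_eq_iff_eq_add']
  apply eq_scalar
  · rw [LinearMap.sub_apply, bracket_one LR hLR, LinearMap.sum_apply, sub_eq_self]
    refine Finset.sum_eq_zero fun p _ => ?_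
    rw [LinearMap.smul_apply, LR_one LR hLR p le_rfl, smul_zero]
  · intro k
    rw [sub_mul, mul_sub, bracket_hOp LR hLR, Finset.sum_mul, Finset.mul_sum]
    have : ∀ p ∈ Finset.range (r + s + 1 + 1),
        ((-1) ^ p * (2 * (wt (r + s + 1) m).coeff (2 * p + 1))) • LR p 0 * hOp k
          = hOp k * ((-1) ^ p * (2 * (wt (r + s + 1) m).coeff (2 * p + 1))) • LR p 0
            - (2 * (wt (r + s + 1) m).coeff (2 * p + 1) * (k : ℂ) ^ (2 * p + 1)) • hOp k := by
      intro p _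
      rw [smul_mul_assoc, LR_comm LR hLR, mul_smul_comm, smul_add, sub_eq_add_neg, smul_smul,
        zero_add, ← end_neg_smul]
      congr 2
      rw [neg_pow]
      have e4 : ((-1 : ℂ) ^ p) * (-1) ^ p = 1 := by rw [← mul_pow]; simp
      push_cast
      simp only [pow_add, pow_one, zero_add, two_mul]
      linear_combination (-(2 * (wt (r + s + 1) m).coeff (p + p + 1) * k ^ p * k * k ^ p)) * e4
    rw [Finset.sum_congr rfl this, Finset.sum_sub_distrib, ← Finset.sum_smul, wt_eigen]
    push_cast
    abel

open Complex in
/-- After the zeta-function modification `L̄⁽ʳ⁾(0) = L⁽ʳ⁾(0) + (−1)ʳ(1/2)ζ(−2r−1)·id_S`,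
the central term of the bracket `[L̄⁽ʳ⁾(m), L̄⁽ˢ⁾(−m)]` is a pure monomial of degree
`2r+2s+3` in `m`: modulo the span of the `L̄⁽ᵖ⁾(0)`, the commutator equals
`c_{r,s}·m^{2r+2s+3}·id_S` for a constant `c_{r,s}` independent of `m`. -/
theorem zeta_modified_commutators_pure_monomial
    (LR : ℕ → ℤ → Module.End ℂ SS)
    (hLR : ∀ (r : ℕ) (n : ℤ) (p : SS), LR r n p
      = (1 / 2 : ℂ) •
          ∑ᶠ j : ℤ, ((j : ℂ) ^ r * ((n : ℂ) - (j : ℂ)) ^ r) • nord j (n - j) p)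
    (Lb : ℕ → ℤ → Module.End ℂ SS)
    (hb0 : ∀ r : ℕ, Lb r 0
      = LR r 0 + ((-1 : ℂ) ^ r * (1 / 2 : ℂ) * riemannZeta (-(2 * (r : ℂ)) - 1)) •
          (1 : Module.End ℂ SS))
    (hbn : ∀ (r : ℕ) (n : ℤ), n ≠ 0 → Lb r n = LR r n)
    (r s : ℕ) :
    ∃ c : ℂ, ∀ m : ℤ,
      Lb r m * Lb s (-m) - Lb s (-m) * Lb r m
          - (c * (m : ℂ) ^ (2 * r + 2 * s + 3)) • (1 : Module.End ℂ SS)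
        ∈ Submodule.span ℂ {g | ∃ p : ℕ, g = Lb p 0} := by
  set β : ℂ := ∫ x in (0 : ℝ)..1, (x : ℂ) ^ (r + s + 1) * (1 - (x : ℂ)) ^ (r + s + 1) with hβ
  -- The bracket with `m > 0`; the claim is symmetric in `r` and `s`.
  have pos : ∀ (r' s' : ℕ), r' + s' = r + s → ∀ m : ℕ, 0 < m →
      LR r' m * LR s' (-m) - LR s' (-m) * LR r' m
          - ((1 / 2 * β) * (m : ℂ) ^ (2 * r + 2 * s + 3)) • (1 : Module.End ℂ SS)
        ∈ Submodule.span ℂ {g | ∃ p : ℕ, g = Lb p 0} := by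
    intro r' s' hrs m hm
    have hz := wt_zeta (r + s + 1) m hm
    rw [← hβ, show 2 * (r + s + 1) + 1 = 2 * r + 2 * s + 3 by ring] at hz
    have hsum : LR r' m * LR s' (-m) - LR s' (-m) * LR r' m
          - ((1 / 2 * β) * (m : ℂ) ^ (2 * r + 2 * s + 3)) • (1 : Module.End ℂ SS)
        = ∑ p ∈ Finset.range (r + s + 1 + 1),
          ((-1) ^ p * (2 * (wt (r + s + 1) m).coeff (2 * p + 1))) • Lb p 0 := by
      rw [bracket_eq LR hLR, hrs]
      simp only [hb0, smul_add, Finset.sum_add_distrib, smul_smul]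
      rw [← Finset.sum_smul, add_sub_assoc, ← end_sub_smul]
      congr 2
      have e : ∀ p ∈ Finset.range (r + s + 1 + 1),
          (-1) ^ p * (2 * (wt (r + s + 1) m).coeff (2 * p + 1))
            * ((-1 : ℂ) ^ p * (1 / 2 : ℂ) * riemannZeta (-(2 * (p : ℂ)) - 1))
          = (1 / 2 : ℂ) * (2 * (wt (r + s + 1) m).coeff (2 * p + 1)
              * riemannZeta (-(2 * (p : ℂ)) - 1)) := by
        intro p _
        have e4 : ((-1 : ℂ) ^ p) * (-1) ^ p = 1 := by rw [← mul_pow]; simp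
        linear_combination ((wt (r + s + 1) m).coeff (2 * p + 1)
          * riemannZeta (-(2 * (p : ℂ)) - 1)) * e4
      rw [Finset.sum_congr rfl e, ← Finset.mul_sum, hz]
      ring
    rw [hsum]
    exact Submodule.sum_mem _ fun p _ =>
      Submodule.smul_mem _ _ (Submodule.subset_span ⟨p, rfl⟩)
  refine ⟨1 / 2 * β, fun m => ?_⟩
  rcases int_cases m with rfl | ⟨n, rfl⟩ | ⟨n, rfl⟩
  · have hcomm : LR r 0 * LR s 0 - LR s 0 * LR r 0 = 0 := by
      apply (eq_scalar _ 0 _ _).trans (zero_smul _ _)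
      · simp [LR_one LR hLR _ le_rfl]
      · intro k
        have := bracket_hOp LR hLR r s 0 k
        simp only [neg_zero] at this
        rw [this]
        push_cast
        rw [zero_sub, zero_add, mul_comm, sub_self, zero_smul, sub_zero]
    have : Lb r 0 * Lb s (-0) - Lb s (-0) * Lb r 0 = 0 := by
      rw [neg_zero, hb0, hb0, ← hcomm]
      simp only [add_mul, mul_add, smul_mul_assoc, mul_smul_comm, one_mul, mul_one, smul_add,
        smul_smul]
      rw [mul_comm ((-1 : ℂ) ^ s * (1 / 2) * _)]
      abel
    rw [this]
    simp
  · have hn : (n : ℤ) ≠ 0 := by have := n.pos; omega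
    rw [hbn r _ hn, hbn s _ (neg_ne_zero.2 hn), Int.cast_natCast]
    exact pos r s rfl n n.pos
  · have hn : (n : ℤ) ≠ 0 := by have := n.pos; omega
    rw [neg_neg, hbn r _ (neg_ne_zero.2 hn), hbn s _ hn]
    have h := Submodule.neg_mem _ (pos s r (add_comm s r) n n.pos)
    convert h using 1
    have hodd : Odd (2 * r + 2 * s + 3) := ⟨r + s + 1, by ring⟩
    push_cast
    rw [hodd.neg_pow, mul_neg, end_neg_smul]
    abel
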